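/- Let R_A = ℝ[p_1,…,p_8]/I_A and R_B = ℝ[q_1,…,q_8]/I_B, where I_A is generated by the 14 polynomials p_1²p_2 − p_4p_3; p_4p_6 − p_2p_8; p_3p_5 − p_2p_7; p_1²p_6 − p_3p_8; p_1²p_5 − p_4p_7; 324p_1p_2³ + 216p_2⁴ + 27p_1p_4p_3 + 162p_2p_4p_3 − 8p_5p_6; 27p_1³p_3 + 324p_1p_2²p_3 + 216p_2³p_3 + 162p_4p_3² − 8p_6p_7; 27p_1³p_4 + 324p_1p_2²p_4 + 216p_2³p_4 + 162p_4²p_3 − 8p_5p_8; 432p_2⁵ − 81p_1²p_4p_3 − 432p_1p_2p_4p_3 − 648p_2²p_4p_3 + 24p_1p_5p_6 − 16p_2p_5p_6; 27p_1⁵ + 162p_1²p_4p_3 + 324p_1p_2p_4p_3 + 216p_2²p_4p_3 − 8p_7p_8; 324p_1p_2²p_3p_6 + 216p_2³p_3p_6 − 8p_6²p_7 + 27p_1p_3²p_8 + 162p_2p_3²p_8; 324p_1p_2²p_4p_5 + 216p_2³p_4p_5 + 27p_1p_4²p_7 + 162p_2p_4²p_7 − 8p_5²p_8; 432p_2⁴p_3p_6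 + 24p_1p_6²p_7 − 16p_2p_6²p_7 − 81p_1²p_3²p_8 − 432p_1p_2p_3²p_8 − 648p_2²p_3²p_8; 432p_2⁴p_4p_5 − 81p_1²p_4²p_7 − 432p_1p_2p_4²p_7 − 648p_2²p_4²p_7 + 24p_1p_5²p_8 − 16p_2p_5²p_8; and I_B is generated by the 14 polynomials 4q_1²q_2 + 24q_1q_2² + 36q_2³ − 9q_3q_4; q_4q_6 − q_2q_8; q_3q_5 − q_2q_7; 4q_1²q_6 + 24q_1q_2q_6 + 36q_2²q_6 − 9q_3q_8; 4q_1²q_5 + 24q_1q_2q_5 + 36q_2²q_5 − 9q_4q_7; 108q_1q_2³ + 216q_2⁴ + 9q_1q_3q_4 − 54q_2q_3q_4 − 4q_5q_6; q_1³q_4 − q_5q_8; q_1³q_3 − q_6q_7; 108q_2⁵ − 9q_1²q_3q_4 + 18q_1q_2q_3q_4 − 27q_2²q_3q_4 + 4q_1q_5q_6 + 16q_2q_5q_6; 4q_1⁵ + 24q_1q_5q_6 + 36q_2q_5q_6 − 9q_7q_8; 108q_1q_2²q_3q_6 + 216q_2³q_3q_6 − 4q_6²q_7 + 9q_1q_3²q_8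 − 54q_2q_3²q_8; 108q_1q_2²q_4q_5 + 216q_2³q_4q_5 + 9q_1q_4²q_7 − 54q_2q_4²q_7 − 4q_5²q_8; 108q_2⁴q_3q_6 + 4q_1q_6²q_7 + 16q_2q_6²q_7 − 9q_1²q_3²q_8 + 18q_1q_2q_3²q_8 − 27q_2²q_3²q_8; 108q_2⁴q_4q_5 − 9q_1²q_4²q_7 + 18q_1q_2q_4²q_7 − 27q_2²q_4²q_7 + 4q_1q_5²q_8 + 16q_2q_5²q_8. Then the assignment Ψ(p_1) = q_1 + 3q_2, Ψ(p_2) = −(3/2)q_2, Ψ(p_3) = q_4, Ψ(p_4) = −(27/8)q_3, Ψ(p_5) = q_6, Ψ(p_6) = −(81/16)q_5, Ψ(p_7) = −(2/3)q_8, Ψ(p_8) = −(729/64)q_7 maps I_A into I_B and induces a degree-preserving isomorphism of graded ℝ-algebras R_A → R_B. -/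

import Mathlib

open MvPolynomial

/-- The polynomial ring `ℝ[p_1,…,p_8]`, with `p_i` the variable `X (i-1)`. -/
abbrev P8 := MvPolynomial (Fin 8) ℝ

/-- The weights `deg p_1 = deg p_2 = 2`, `deg p_3 = deg p_4 = 3`,
`deg p_5 = deg p_6 = 4`, `deg p_7 = deg p_8 = 5` (same for the `q_i`). -/
def w8 : Fin 8 → ℕ := ![2, 2, 3, 3, 4, 4, 5, 5]

set_option maxHeartbeats 2000000 in
/-- The ideal `I_A` of on-shell relations for the weight row `A = (-2,3,6)`,
in the generators `p_1,…,p_8` (as `X 0,…,X 7`). -/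
noncomputable def IA : Ideal P8 := Ideal.span
  { X 0 ^ 2 * X 1 - X 3 * X 2,
    X 3 * X 5 - X 1 * X 7,
    X 2 * X 4 - X 1 * X 6,
    X 0 ^ 2 * X 5 - X 2 * X 7,
    X 0 ^ 2 * X 4 - X 3 * X 6,
    324 * X 0 * X 1 ^ 3 + 216 * X 1 ^ 4 + 27 * X 0 * X 3 * X 2
      + 162 * X 1 * X 3 * X 2 - 8 * X 4 * X 5,
    27 * X 0 ^ 3 * X 2 + 324 * X 0 * X 1 ^ 2 * X 2 + 216 * X 1 ^ 3 * X 2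
      + 162 * X 3 * X 2 ^ 2 - 8 * X 5 * X 6,
    27 * X 0 ^ 3 * X 3 + 324 * X 0 * X 1 ^ 2 * X 3 + 216 * X 1 ^ 3 * X 3
      + 162 * X 3 ^ 2 * X 2 - 8 * X 4 * X 7,
    432 * X 1 ^ 5 - 81 * X 0 ^ 2 * X 3 * X 2 - 432 * X 0 * X 1 * X 3 * X 2
      - 648 * X 1 ^ 2 * X 3 * X 2 + 24 * X 0 * X 4 * X 5 - 16 * X 1 * X 4 * X 5,
    27 * X 0 ^ 5 + 162 * X 0 ^ 2 * X 3 * X 2 + 324 * X 0 * X 1 * X 3 * X 2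
      + 216 * X 1 ^ 2 * X 3 * X 2 - 8 * X 6 * X 7,
    324 * X 0 * X 1 ^ 2 * X 2 * X 5 + 216 * X 1 ^ 3 * X 2 * X 5 - 8 * X 5 ^ 2 * X 6
      + 27 * X 0 * X 2 ^ 2 * X 7 + 162 * X 1 * X 2 ^ 2 * X 7,
    324 * X 0 * X 1 ^ 2 * X 3 * X 4 + 216 * X 1 ^ 3 * X 3 * X 4
      + 27 * X 0 * X 3 ^ 2 * X 6 + 162 * X 1 * X 3 ^ 2 * X 6 - 8 * X 4 ^ 2 * X 7,
    432 * X 1 ^ 4 * X 2 * X 5 + 24 * X 0 * X 5 ^ 2 * X 6 - 16 * X 1 * X 5 ^ 2 * X 6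
      - 81 * X 0 ^ 2 * X 2 ^ 2 * X 7 - 432 * X 0 * X 1 * X 2 ^ 2 * X 7
      - 648 * X 1 ^ 2 * X 2 ^ 2 * X 7,
    432 * X 1 ^ 4 * X 3 * X 4 - 81 * X 0 ^ 2 * X 3 ^ 2 * X 6
      - 432 * X 0 * X 1 * X 3 ^ 2 * X 6 - 648 * X 1 ^ 2 * X 3 ^ 2 * X 6
      + 24 * X 0 * X 4 ^ 2 * X 7 - 16 * X 1 * X 4 ^ 2 * X 7 }

set_option maxHeartbeats 2000000 in
/-- The ideal `I_B` of on-shell relations for the weight row `B = (-3,2,6)`,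
in the generators `q_1,…,q_8` (as `X 0,…,X 7`). -/
noncomputable def IB : Ideal P8 := Ideal.span
  { 4 * X 0 ^ 2 * X 1 + 24 * X 0 * X 1 ^ 2 + 36 * X 1 ^ 3 - 9 * X 2 * X 3,
    X 3 * X 5 - X 1 * X 7,
    X 2 * X 4 - X 1 * X 6,
    4 * X 0 ^ 2 * X 5 + 24 * X 0 * X 1 * X 5 + 36 * X 1 ^ 2 * X 5 - 9 * X 2 * X 7,
    4 * X 0 ^ 2 * X 4 + 24 * X 0 * X 1 * X 4 + 36 * X 1 ^ 2 * X 4 - 9 * X 3 * X 6,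
    108 * X 0 * X 1 ^ 3 + 216 * X 1 ^ 4 + 9 * X 0 * X 2 * X 3
      - 54 * X 1 * X 2 * X 3 - 4 * X 4 * X 5,
    X 0 ^ 3 * X 3 - X 4 * X 7,
    X 0 ^ 3 * X 2 - X 5 * X 6,
    108 * X 1 ^ 5 - 9 * X 0 ^ 2 * X 2 * X 3 + 18 * X 0 * X 1 * X 2 * X 3
      - 27 * X 1 ^ 2 * X 2 * X 3 + 4 * X 0 * X 4 * X 5 + 16 * X 1 * X 4 * X 5,
    4 * X 0 ^ 5 + 24 * X 0 * X 4 * X 5 + 36 * X 1 * X 4 * X 5 - 9 * X 6 * X 7,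
    108 * X 0 * X 1 ^ 2 * X 2 * X 5 + 216 * X 1 ^ 3 * X 2 * X 5 - 4 * X 5 ^ 2 * X 6
      + 9 * X 0 * X 2 ^ 2 * X 7 - 54 * X 1 * X 2 ^ 2 * X 7,
    108 * X 0 * X 1 ^ 2 * X 3 * X 4 + 216 * X 1 ^ 3 * X 3 * X 4
      + 9 * X 0 * X 3 ^ 2 * X 6 - 54 * X 1 * X 3 ^ 2 * X 6 - 4 * X 4 ^ 2 * X 7,
    108 * X 1 ^ 4 * X 2 * X 5 + 4 * X 0 * X 5 ^ 2 * X 6 + 16 * X 1 * X 5 ^ 2 * X 6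
      - 9 * X 0 ^ 2 * X 2 ^ 2 * X 7 + 18 * X 0 * X 1 * X 2 ^ 2 * X 7
      - 27 * X 1 ^ 2 * X 2 ^ 2 * X 7,
    108 * X 1 ^ 4 * X 3 * X 4 - 9 * X 0 ^ 2 * X 3 ^ 2 * X 6
      + 18 * X 0 * X 1 * X 3 ^ 2 * X 6 - 27 * X 1 ^ 2 * X 3 ^ 2 * X 6
      + 4 * X 0 * X 4 ^ 2 * X 7 + 16 * X 1 * X 4 ^ 2 * X 7 }

/-- The substitution `Ψ : p_1 ↦ q_1 + 3q_2, p_2 ↦ -(3/2)q_2, p_3 ↦ q_4, p_4 ↦ -(27/8)q_3,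
p_5 ↦ q_6, p_6 ↦ -(81/16)q_5, p_7 ↦ -(2/3)q_8, p_8 ↦ -(729/64)q_7`. -/
noncomputable def PsiMap : P8 →ₐ[ℝ] P8 :=
  aeval ![X 0 + C (3 : ℝ) * X 1, C (-(3 / 2) : ℝ) * X 1, X 3, C (-(27 / 8) : ℝ) * X 2,
          X 5, C (-(81 / 16) : ℝ) * X 4, C (-(2 / 3) : ℝ) * X 7, C (-(729 / 64) : ℝ) * X 6]


/-- The inverse substitution. -/
noncomputable def ChiMap : P8 →ₐ[ℝ] P8 :=
  aeval ![X 0 + C (2 : ℝ) * X 1, C (-(2 / 3) : ℝ) * X 1, C (-(8 / 27) : ℝ) * X 3, X 2,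
          C (-(16 / 81) : ℝ) * X 5, X 4, C (-(64 / 729) : ℝ) * X 7, C (-(3 / 2) : ℝ) * X 6]

theorem eval_aeval_aux (v : Fin 8 → P8) (x : Fin 8 → ℝ) (f : P8) :
    eval x (aeval v f) = eval (fun i => eval x (v i)) f := by
  have h : (eval x).comp (aeval v : P8 →ₐ[ℝ] P8).toRingHom = eval (fun i => eval x (v i)) := by
    apply MvPolynomial.ringHom_ext
    · intro r
      simp [algHom_C]
    · intro i
      simp
  exact DFunLike.congr_fun h f

theorem eval_psi (x : Fin 8 → ℝ) (f : P8) : eval x (PsiMap f) =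
    eval ![x 0 + 3 * x 1, -(3 / 2) * x 1, x 3, -(27 / 8) * x 2,
          x 5, -(81 / 16) * x 4, -(2 / 3) * x 7, -(729 / 64) * x 6] f := by
  rw [PsiMap, eval_aeval_aux]
  congr 2
  funext i
  fin_cases i <;> simp

theorem eval_chi (x : Fin 8 → ℝ) (f : P8) : eval x (ChiMap f) =
    eval ![x 0 + 2 * x 1, -(2 / 3) * x 1, -(8 / 27) * x 3, x 2,
          -(16 / 81) * x 5, x 4, -(64 / 729) * x 7, -(3 / 2) * x 6] f := by
  rw [ChiMap, eval_aeval_aux]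
  congr 2
  funext i
  fin_cases i <;> simp

theorem span_red {S : Set P8} {f g : P8} (c : P8) (hg : g ∈ S)
    (h : f - c * g ∈ Ideal.span S) : f ∈ Ideal.span S := by
  have := Ideal.add_mem _ h (Ideal.mul_mem_left _ c (Ideal.subset_span hg))
  simpa using this

theorem span_fin {S : Set P8} {f : P8} (h : ∀ x, eval x f = 0) : f ∈ Ideal.span S := by
  have : f = 0 := MvPolynomial.funext fun x => by simpa using h x
  rw [this]
  exact Ideal.zero_mem _

set_option maxHeartbeats 4000000 in
theorem psi_mem : ∀ f ∈ IA, PsiMap f ∈ IB := by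
  change IA ≤ IB.comap PsiMap
  unfold IA
  rw [Ideal.span_le]
  unfold IB
  rintro f (rfl|rfl|rfl|rfl|rfl|rfl|rfl|rfl|rfl|rfl|rfl|rfl|rfl|rfl) <;>
    refine Ideal.mem_comap.mpr ?_
  · refine span_red (C (-(3/8) : ℝ)) (Or.inl rfl) ?_
    refine span_fin fun x => ?_
    simp [eval_psi]
    ring
  · refine span_red (C (2187/128 : ℝ)) (Or.inr <| Or.inr <| Or.inl rfl) ?_
    refine span_fin fun x => ?_
    simp [eval_psi]
    ring
  · refine span_red (C (1 : ℝ)) (Or.inr <| Or.inl rfl) ?_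
    refine span_fin fun x => ?_
    simp [eval_psi]
    ring
  · refine span_red (C (-(81/64) : ℝ)) (Or.inr <| Or.inr <| Or.inr <| Or.inr <| Or.inl rfl) ?_
    refine span_fin fun x => ?_
    simp [eval_psi]
    ring
  · refine span_red (C (1/4 : ℝ)) (Or.inr <| Or.inr <| Or.inr <| Or.inl rfl) ?_
    refine span_fin fun x => ?_
    simp [eval_psi]
    ring
  · refine span_red (C (-(81/8) : ℝ)) (Or.inr <| Or.inr <| Or.inr <| Or.inr <| Or.inr <| Or.inl rfl) ?_
    refine span_fin fun x => ?_
    simp [eval_psi]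
    ring
  · refine span_red (C (27 : ℝ)) (Or.inr <| Or.inr <| Or.inr <| Or.inr <| Or.inr <| Or.inr <| Or.inl rfl) ?_
    refine span_red (C (243/4 : ℝ) * X 3) (Or.inl rfl) ?_
    refine span_fin fun x => ?_
    simp [eval_psi]
    ring
  · refine span_red (C (-(729/8) : ℝ)) (Or.inr <| Or.inr <| Or.inr <| Or.inr <| Or.inr <| Or.inr <| Or.inr <| Or.inl rfl) ?_
    refine span_red (C (-(6561/32) : ℝ) * X 2) (Or.inl rfl) ?_
    refine span_fin fun x => ?_
    simp [eval_psi]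
    ring
  · refine span_red (C (-(243/8) : ℝ)) (Or.inr <| Or.inr <| Or.inr <| Or.inr <| Or.inr <| Or.inr <| Or.inr <| Or.inr <| Or.inl rfl) ?_
    refine span_fin fun x => ?_
    simp [eval_psi]
    ring
  · refine span_red (C (27/4 : ℝ)) (Or.inr <| Or.inr <| Or.inr <| Or.inr <| Or.inr <| Or.inr <| Or.inr <| Or.inr <| Or.inr <| Or.inl rfl) ?_
    refine span_red (C (405/4 : ℝ) * X 0 ^ 2) (Or.inl rfl) ?_
    refine span_red (C (135/4 : ℝ) * X 0) (Or.inr <| Or.inr <| Or.inr <| Or.inr <| Or.inr <| Or.inl rfl) ?_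
    refine span_red (C (-(27/4) : ℝ)) (Or.inr <| Or.inr <| Or.inr <| Or.inr <| Or.inr <| Or.inr <| Or.inr <| Or.inr <| Or.inl rfl) ?_
    refine span_red (C (135/4 : ℝ) * X 1) (Or.inr <| Or.inr <| Or.inr <| Or.inr <| Or.inr <| Or.inl rfl) ?_
    refine span_fin fun x => ?_
    simp [eval_psi]
    ring
  · refine span_red (C (-(2187/64) : ℝ)) (Or.inr <| Or.inr <| Or.inr <| Or.inr <| Or.inr <| Or.inr <| Or.inr <| Or.inr <| Or.inr <| Or.inr <| Or.inr <| Or.inl rfl) ?_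
    refine span_fin fun x => ?_
    simp [eval_psi]
    ring
  · refine span_red (C (-(729/32) : ℝ)) (Or.inr <| Or.inr <| Or.inr <| Or.inr <| Or.inr <| Or.inr <| Or.inr <| Or.inr <| Or.inr <| Or.inr <| Or.inl rfl) ?_
    refine span_fin fun x => ?_
    simp [eval_psi]
    ring
  · refine span_red (C (-(6561/64) : ℝ)) (Or.inr <| Or.inr <| Or.inr <| Or.inr <| Or.inr <| Or.inr <| Or.inr <| Or.inr <| Or.inr <| Or.inr <| Or.inr <| Or.inr <| Or.inr <| rfl) ?_
    refine span_fin fun x => ?_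
    simp [eval_psi]
    ring
  · refine span_red (C (-(2187/32) : ℝ)) (Or.inr <| Or.inr <| Or.inr <| Or.inr <| Or.inr <| Or.inr <| Or.inr <| Or.inr <| Or.inr <| Or.inr <| Or.inr <| Or.inr <| Or.inl rfl) ?_
    refine span_fin fun x => ?_
    simp [eval_psi]
    ring

set_option maxHeartbeats 4000000 in
theorem chi_mem : ∀ f ∈ IB, ChiMap f ∈ IA := by
  change IB ≤ IA.comap ChiMap
  unfold IB
  rw [Ideal.span_le]
  unfold IA
  rintro f (rfl|rfl|rfl|rfl|rfl|rfl|rfl|rfl|rfl|rfl|rfl|rfl|rfl|rfl) <;>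
    refine Ideal.mem_comap.mpr ?_
  · refine span_red (C (-(8/3) : ℝ)) (Or.inl rfl) ?_
    refine span_fin fun x => ?_
    simp [eval_chi]
    ring
  · refine span_red (C (1 : ℝ)) (Or.inr <| Or.inr <| Or.inl rfl) ?_
    refine span_fin fun x => ?_
    simp [eval_chi]
    ring
  · refine span_red (C (128/2187 : ℝ)) (Or.inr <| Or.inl rfl) ?_
    refine span_fin fun x => ?_
    simp [eval_chi]
    ring
  · refine span_red (C (4 : ℝ)) (Or.inr <| Or.inr <| Or.inr <| Or.inr <| Or.inl rfl) ?_
    refine span_fin fun x => ?_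
    simp [eval_chi]
    ring
  · refine span_red (C (-(64/81) : ℝ)) (Or.inr <| Or.inr <| Or.inr <| Or.inl rfl) ?_
    refine span_fin fun x => ?_
    simp [eval_chi]
    ring
  · refine span_red (C (-(8/81) : ℝ)) (Or.inr <| Or.inr <| Or.inr <| Or.inr <| Or.inr <| Or.inl rfl) ?_
    refine span_fin fun x => ?_
    simp [eval_chi]
    ring
  · refine span_red (C (1/27 : ℝ)) (Or.inr <| Or.inr <| Or.inr <| Or.inr <| Or.inr <| Or.inr <| Or.inl rfl) ?_
    refine span_red (C (6 : ℝ) * X 2) (Or.inl rfl) ?_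
    refine span_fin fun x => ?_
    simp [eval_chi]
    ring
  · refine span_red (C (-(8/729) : ℝ)) (Or.inr <| Or.inr <| Or.inr <| Or.inr <| Or.inr <| Or.inr <| Or.inr <| Or.inl rfl) ?_
    refine span_red (C (-(16/9) : ℝ) * X 3) (Or.inl rfl) ?_
    refine span_fin fun x => ?_
    simp [eval_chi]
    ring
  · refine span_red (C (-(8/243) : ℝ)) (Or.inr <| Or.inr <| Or.inr <| Or.inr <| Or.inr <| Or.inr <| Or.inr <| Or.inr <| Or.inl rfl) ?_
    refine span_fin fun x => ?_
    simp [eval_chi]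
    ring
  · refine span_red (C (4/27 : ℝ)) (Or.inr <| Or.inr <| Or.inr <| Or.inr <| Or.inr <| Or.inr <| Or.inr <| Or.inr <| Or.inr <| Or.inl rfl) ?_
    refine span_red (C (32/243 : ℝ)) (Or.inr <| Or.inr <| Or.inr <| Or.inr <| Or.inr <| Or.inr <| Or.inr <| Or.inr <| Or.inl rfl) ?_
    refine span_red (C (40 : ℝ) * X 0 ^ 2) (Or.inl rfl) ?_
    refine span_red (C (160 : ℝ) * X 0 * X 1) (Or.inl rfl) ?_
    refine span_red (C (80/81 : ℝ) * X 0) (Or.inr <| Or.inr <| Or.inr <| Or.inr <| Or.inr <| Or.inl rfl) ?_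
    refine span_red (C (80/243 : ℝ) * X 1) (Or.inr <| Or.inr <| Or.inr <| Or.inr <| Or.inr <| Or.inl rfl) ?_
    refine span_fin fun x => ?_
    simp [eval_chi]
    ring
  · refine span_red (C (-(32/729) : ℝ)) (Or.inr <| Or.inr <| Or.inr <| Or.inr <| Or.inr <| Or.inr <| Or.inr <| Or.inr <| Or.inr <| Or.inr <| Or.inr <| Or.inl rfl) ?_
    refine span_fin fun x => ?_
    simp [eval_chi]
    ring
  · refine span_red (C (-(64/2187) : ℝ)) (Or.inr <| Or.inr <| Or.inr <| Or.inr <| Or.inr <| Or.inr <| Or.inr <| Or.inr <| Or.inr <| Or.inr <| Or.inl rfl) ?_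
    refine span_fin fun x => ?_
    simp [eval_chi]
    ring
  · refine span_red (C (-(32/2187) : ℝ)) (Or.inr <| Or.inr <| Or.inr <| Or.inr <| Or.inr <| Or.inr <| Or.inr <| Or.inr <| Or.inr <| Or.inr <| Or.inr <| Or.inr <| Or.inr <| rfl) ?_
    refine span_fin fun x => ?_
    simp [eval_chi]
    ring
  · refine span_red (C (-(64/6561) : ℝ)) (Or.inr <| Or.inr <| Or.inr <| Or.inr <| Or.inr <| Or.inr <| Or.inr <| Or.inr <| Or.inr <| Or.inr <| Or.inr <| Or.inr <| Or.inl rfl) ?_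
    refine span_fin fun x => ?_
    simp [eval_chi]
    ring

theorem psi_chi : PsiMap.comp ChiMap = AlgHom.id ℝ P8 := by
  apply MvPolynomial.algHom_ext
  intro i
  apply MvPolynomial.funext
  intro x
  fin_cases i <;> simp [eval_psi, eval_chi] <;> ring

theorem chi_psi : ChiMap.comp PsiMap = AlgHom.id ℝ P8 := by
  apply MvPolynomial.algHom_ext
  intro i
  apply MvPolynomial.funext
  intro x
  fin_cases i <;> simp [eval_psi, eval_chi] <;> ring

/-- `Ψ` as an algebra automorphism. -/
noncomputable def psiEquiv : P8 ≃ₐ[ℝ] P8 := AlgEquiv.ofAlgHom PsiMap ChiMap psi_chi chi_psi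

theorem aeval_homog (v : Fin 8 → P8) (hv : ∀ i, (v i).IsWeightedHomogeneous w8 (w8 i))
    {f : P8} {d : ℕ} (hf : f.IsWeightedHomogeneous w8 d) :
    (aeval v f : P8).IsWeightedHomogeneous w8 d := by
  rw [aeval_def, eval₂_eq]
  refine IsWeightedHomogeneous.sum _ _ _ fun m hm => ?_
  rw [← zero_add d]
  refine (isWeightedHomogeneous_C w8 _).mul ?_
  have h1 := hf (mem_support_iff.mp hm)
  have h2 := IsWeightedHomogeneous.prod m.support (fun i => v i ^ m i) (fun i => m i • w8 i)
    (fun i _ => (hv i).pow (m i))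
  rw [← h1, Finsupp.weight_apply]
  exact h2

theorem cX (r : ℝ) (i : Fin 8) : (C r * X i : P8).IsWeightedHomogeneous w8 (w8 i) := by
  have := (isWeightedHomogeneous_C w8 r).mul (isWeightedHomogeneous_X ℝ w8 i)
  rwa [zero_add] at this

theorem oX (i : Fin 8) : (X i : P8).IsWeightedHomogeneous w8 (w8 i) :=
  isWeightedHomogeneous_X ℝ w8 i

theorem psi_homog {f : P8} {d : ℕ} (hf : f.IsWeightedHomogeneous w8 d) :
    (PsiMap f).IsWeightedHomogeneous w8 d := by
  refine aeval_homog _ (fun i => ?_) hf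
  fin_cases i
  exacts [(oX 0).add (cX 3 1), cX _ 1, oX 3, cX _ 2, oX 5, cX _ 4, cX _ 7, cX _ 6]

theorem chi_homog {f : P8} {d : ℕ} (hf : f.IsWeightedHomogeneous w8 d) :
    (ChiMap f).IsWeightedHomogeneous w8 d := by
  refine aeval_homog _ (fun i => ?_) hf
  fin_cases i
  exacts [(oX 0).add (cX 2 1), cX _ 1, cX _ 3, oX 2, cX _ 5, oX 4, cX _ 7, cX _ 6]

theorem map_eq : IB = IA.map (psiEquiv : P8 →+* P8) := by
  apply le_antisymm
  · intro f hf
    have h := Ideal.mem_map_of_mem (psiEquiv : P8 →+* P8) (chi_mem f hf)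
    have e : (psiEquiv : P8 →+* P8) (ChiMap f) = f := DFunLike.congr_fun psi_chi f
    rwa [e] at h
  · rw [Ideal.map_le_iff_le_comap]
    exact psi_mem

/-- `Ψ` maps `I_A` into `I_B` and induces a degree-preserving isomorphism
of graded ℝ-algebras `R_A = ℝ[p]/I_A → R_B = ℝ[q]/I_B`. -/
theorem stmt16 :
    (∀ f ∈ IA, PsiMap f ∈ IB)
    ∧
    (∃ Φ : (P8 ⧸ IA) ≃ₐ[ℝ] (P8 ⧸ IB),
      (∀ f : P8, Φ (Ideal.Quotient.mk IA f) = Ideal.Quotient.mk IB (PsiMap f))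
      ∧
      (∀ d : ℕ,
        Φ '' (Ideal.Quotient.mk IA '' {f : P8 | f.IsWeightedHomogeneous w8 d})
          = Ideal.Quotient.mk IB '' {f : P8 | f.IsWeightedHomogeneous w8 d})) := by
  refine ⟨psi_mem, Ideal.quotientEquivAlg IA IB psiEquiv map_eq, fun f => rfl, fun d => ?_⟩
  ext y
  constructor
  · rintro ⟨_, ⟨f, hf, rfl⟩, rfl⟩
    exact ⟨PsiMap f, psi_homog hf, rfl⟩
  · rintro ⟨f, hf, rfl⟩
    refine ⟨_, ⟨ChiMap f, chi_homog hf, rfl⟩, ?_⟩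
    change Ideal.Quotient.mk IB (PsiMap (ChiMap f)) = _
    rw [show PsiMap (ChiMap f) = f from DFunLike.congr_fun psi_chi f]
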